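/- arXiv:2406.04715 — 2 statements merged into one kernel-verified Lean document; each statement's English description precedes it below -/
import Mathlib

section
/- Let t ∈ ℂ and let σ̃_t be the automorphism of SL(2,ℂ) given by σ̃_t(B) = A_t⁻¹ B A_t. Then (SL(2,ℂ), H̃_t, σ̃_t) is a quandle triplet, and the map φ : Q(SL(2,ℂ), H̃_t, σ̃_t) → Conj(X̃_t) defined by φ(H̃_t g) = g⁻¹ A_t g is a well-defined bijection satisfying φ(H̃_t x ◁ H̃_t y) = φ(H̃_t y)⁻¹ · φ(H̃_t x) · φ(H̃_t y); hence Conj(X̃_t) is isomorphic as a quandle to Q(SL(2,ℂ), H̃_t, σ̃_t). -/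
/-!
For any `a` in a group, `Hg ↦ g⁻¹ a g` identifies the right cosets of the centralizer `H` of `a`
with the conjugacy class of `a`, by orbit-stabilizer, and turns `H x ◁ H y` into conjugation. So
it has to be seen that `H̃_t` is the centralizer of `A_t` and that `X̃_t` is its conjugacy class.

A matrix `A ∈ SL(2)` of trace `t` that is not central has a row vector `v` such that `v, v A` are
linearly independent, and in this basis it becomes the companion matrix of `X² - t X + 1`. When
every scalar is a square, the basis can be rescaled to have determinant `1`. Hence noncentral
elements of `SL(2)` with the same trace are conjugate.
-/

open Matrix

abbrev SL2C := Matrix.SpecialLinearGroup (Fin 2) ℂ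

/-- `X̃_t`: the set of elements of `SL(2,ℂ)` of trace `t`, other than `±I`. -/
def XtSL (t : ℂ) : Set SL2C :=
  {A | Matrix.trace (A : Matrix (Fin 2) (Fin 2) ℂ) = t ∧
    (A : Matrix (Fin 2) (Fin 2) ℂ) ≠ 1 ∧ (A : Matrix (Fin 2) (Fin 2) ℂ) ≠ -1}

/-- `H̃_{±2}`: the elements `ε'·[[1,μ],[0,1]]` of `SL(2,ℂ)`, `ε' ∈ {1,−1}`, `μ ∈ ℂ`. -/
def HparSL : Set SL2C :=
  {B | ∃ ε μ : ℂ, (ε = 1 ∨ ε = -1) ∧ (B : Matrix (Fin 2) (Fin 2) ℂ) = !![ε, μ; 0, ε]}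

/-- `H̃_t` (`t ≠ ±2`): the diagonal matrices `[[μ,0],[0,μ⁻¹]]`, `μ ∈ ℂ*`. -/
def HdiagSL : Set SL2C :=
  {B | ∃ μ : ℂ, μ ≠ 0 ∧ (B : Matrix (Fin 2) (Fin 2) ℂ) = !![μ, 0; 0, μ⁻¹]}

open scoped MatrixGroups

section Group

variable {G : Type*} [Group G]

/-- `(G, H, σ)` with `σ g = a⁻¹ g a` is a quandle triplet, and `H g ↦ g⁻¹ a g` is a well-defined
isomorphism of quandles from `Q(G, H, σ)` onto `Conj(X)`. The set `X` is not assumed to be closed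
under conjugation, so that the homomorphism property is stated in `G`. -/
def PresentsConjQuandle (a : G) (H : Subgroup G) (X : Set G) : Prop :=
  (∀ h ∈ H, a⁻¹ * h * a = h) ∧
  ∃ φ : Quotient (QuotientGroup.rightRel H) → ↥X,
    (∀ g : G, (φ (Quotient.mk (QuotientGroup.rightRel H) g) : G) = g⁻¹ * a * g) ∧
    Function.Bijective φ ∧
    (∀ x y : G,
      (φ (Quotient.mk (QuotientGroup.rightRel H) (a⁻¹ * (x * y⁻¹) * a * y)) : G)
        = (φ (Quotient.mk (QuotientGroup.rightRel H) y) : G)⁻¹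
          * (φ (Quotient.mk (QuotientGroup.rightRel H) x) : G)
          * (φ (Quotient.mk (QuotientGroup.rightRel H) y) : G))

lemma rightRel_centralizer_singleton_iff {a x y : G} :
    QuotientGroup.rightRel (Subgroup.centralizer {a}) x y ↔ x⁻¹ * a * x = y⁻¹ * a * y := by
  rw [QuotientGroup.rightRel_apply, Subgroup.mem_centralizer_singleton_iff]
  constructor <;> intro h
  · calc x⁻¹ * a * x = y⁻¹ * (y * x⁻¹ * a) * x := by group
      _ = y⁻¹ * a * y := by rw [h]; group
  · calc y * x⁻¹ * a = y * (x⁻¹ * a * x) * x⁻¹ := by group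
      _ = a * (y * x⁻¹) := by rw [h]; group

/-- The orbit-stabilizer map `H g ↦ g⁻¹ a g`, where `H` is the centralizer of `a`. -/
def cosetToConjugate (a : G) :
    Quotient (QuotientGroup.rightRel (Subgroup.centralizer {a})) → conjugatesOf a :=
  Quotient.lift (fun g ↦ ⟨g⁻¹ * a * g, isConj_iff.2 ⟨g⁻¹, by rw [inv_inv]⟩⟩)
    fun _ _ h ↦ Subtype.ext (rightRel_centralizer_singleton_iff.1 h)

lemma cosetToConjugate_bijective (a : G) : Function.Bijective (cosetToConjugate a) := by
  constructor
  · rintro ⟨x⟩ ⟨y⟩ h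
    exact Quotient.sound (rightRel_centralizer_singleton_iff.2 (congrArg Subtype.val h))
  · rintro ⟨b, hb⟩
    obtain ⟨g, rfl⟩ := isConj_iff.1 hb
    exact ⟨Quotient.mk _ g⁻¹, Subtype.ext (congrArg (· * a * g⁻¹) (inv_inv g))⟩

theorem presentsConjQuandle_centralizer (a : G) :
    PresentsConjQuandle a (Subgroup.centralizer {a}) (conjugatesOf a) := by
  refine ⟨fun h hh ↦ ?_, cosetToConjugate a, fun _ ↦ rfl, cosetToConjugate_bijective a,
    fun x y ↦ ?_⟩
  · rw [mul_assoc, Subgroup.mem_centralizer_singleton_iff.1 hh, inv_mul_cancel_left]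
  · simp only [cosetToConjugate, Quotient.lift_mk]
    group

end Group

section Conjugacy

lemma isConj_of_pow_card_mul_det_eq_one {n R : Type*} [Fintype n] [DecidableEq n] [CommRing R]
    {A B : Matrix.SpecialLinearGroup n R} {P : Matrix n n R} {s : R}
    (hs : s ^ Fintype.card n * P.det = 1) (h : P * (A : Matrix n n R) = B * P) : IsConj A B := by
  let g : Matrix.SpecialLinearGroup n R := ⟨s • P, by rw [det_smul, hs]⟩
  have hg : g * A = B * g := Subtype.ext <| by
    calc s • P * (A : Matrix n n R) = s • (P * (A : Matrix n n R)) := smul_mul s P _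
      _ = (B : Matrix n n R) * s • P := by rw [h, Matrix.mul_smul]
  exact isConj_iff.2 ⟨g, mul_inv_eq_iff_eq_mul.2 hg⟩

variable {R : Type*} [CommRing R]

/-- The matrix with rows `v` and `v M`, the change of basis that brings `M` to companion form
when `v` is a cyclic vector of `M`. -/
def krylovMatrix (M : Matrix (Fin 2) (Fin 2) R) (v : Fin 2 → R) : Matrix (Fin 2) (Fin 2) R :=
  Matrix.of ![v, v ᵥ* M]

lemma krylovMatrix_mul (M : Matrix (Fin 2) (Fin 2) R) (v : Fin 2 → R) :
    krylovMatrix M v * M = !![0, 1; -M.det, M.trace] * krylovMatrix M v := by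
  rw [← Matrix.ext_iff]
  simp only [krylovMatrix, mul_apply, vecMul, dotProduct, Fin.forall_fin_two, Fin.sum_univ_two,
    det_fin_two, trace_fin_two, of_apply, cons_val', cons_val_zero, cons_val_one, cons_val_fin_one]
  refine ⟨⟨?_, ?_⟩, ?_, ?_⟩ <;> ring

lemma det_krylovMatrix (M : Matrix (Fin 2) (Fin 2) R) (x y : R) :
    (krylovMatrix M ![x, y]).det
      = M 0 1 * x ^ 2 + (M 1 1 - M 0 0) * x * y - M 1 0 * y ^ 2 := by
  simp only [krylovMatrix, det_fin_two, of_apply, vecMul, dotProduct, Fin.sum_univ_two,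
    cons_val_zero, cons_val_one]
  ring

lemma mem_center_SL2_iff {A : SL(2, R)} :
    A ∈ Subgroup.center SL(2, R) ↔ A 0 1 = 0 ∧ A 1 0 = 0 ∧ A 0 0 = A 1 1 := by
  rw [Matrix.SpecialLinearGroup.mem_center_iff]
  constructor
  · rintro ⟨r, -, hr⟩
    simp [← hr]
  · rintro ⟨h01, h10, h⟩
    have hdet := A.det_coe
    rw [det_fin_two, h01, h10, ← h] at hdet
    refine ⟨A 0 0, by simpa [sq] using hdet, ?_⟩
    ext i j
    fin_cases i <;> fin_cases j <;> simp [h01, h10, h]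

lemma mem_center_SL2_iff_eq_one_or_eq_neg_one [NoZeroDivisors R] {A : SL(2, R)} :
    A ∈ Subgroup.center SL(2, R) ↔
      (A : Matrix (Fin 2) (Fin 2) R) = 1 ∨ (A : Matrix (Fin 2) (Fin 2) R) = -1 := by
  rw [Matrix.SpecialLinearGroup.mem_center_iff]
  constructor
  · rintro ⟨r, hr, hA⟩
    rw [← hA]
    exact (sq_eq_one_iff.1 hr).imp (fun h ↦ by rw [h, map_one]) fun h ↦ by rw [h, map_neg, map_one]
  · rintro (h | h)
    · exact ⟨1, one_pow _, by rw [h, map_one]⟩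
    · exact ⟨-1, by simp, by rw [h, map_neg, map_one]⟩

lemma exists_det_krylovMatrix_ne_zero {A : SL(2, R)} (hA : A ∉ Subgroup.center SL(2, R)) :
    ∃ v, (krylovMatrix (A : Matrix (Fin 2) (Fin 2) R) v).det ≠ 0 := by
  contrapose! hA
  have h01 : A 0 1 = 0 := by simpa [det_krylovMatrix] using hA ![1, 0]
  have h10 : A 1 0 = 0 := by simpa [det_krylovMatrix] using hA ![0, 1]
  have h : A 1 1 - A 0 0 = 0 := by simpa [det_krylovMatrix, h01, h10] using hA ![1, 1]
  exact mem_center_SL2_iff.2 ⟨h01, h10, (sub_eq_zero.1 h).symm⟩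

/-- The companion matrix of `X² - t X + 1`, the normal form of a noncentral element of trace `t`,
for the action on row vectors. -/
def companionSL2 (t : R) : SL(2, R) :=
  ⟨!![0, 1; -1, t], by simp⟩

variable {K : Type*} [Field K]

lemma isConj_companionSL2 (hK : ∀ x : K, IsSquare x) {A : SL(2, K)}
    (hA : A ∉ Subgroup.center SL(2, K)) :
    IsConj A (companionSL2 (A : Matrix (Fin 2) (Fin 2) K).trace) := by
  obtain ⟨v, hv⟩ := exists_det_krylovMatrix_ne_zero hA
  obtain ⟨s, hs⟩ := hK (krylovMatrix (A : Matrix (Fin 2) (Fin 2) K) v).det⁻¹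
  refine isConj_of_pow_card_mul_det_eq_one (P := krylovMatrix A v) (s := s) ?_ ?_
  · rw [Fintype.card_fin, sq, ← hs, inv_mul_cancel₀ hv]
  · rw [krylovMatrix_mul, A.det_coe, companionSL2]

/-- `X̃_t` over a general ring: the elements of `SL(2, R)` of trace `t` other than `±I`. -/
def nonscalarOfTrace (t : R) : Set SL(2, R) :=
  {A | Matrix.trace (A : Matrix (Fin 2) (Fin 2) R) = t ∧
    (A : Matrix (Fin 2) (Fin 2) R) ≠ 1 ∧ (A : Matrix (Fin 2) (Fin 2) R) ≠ -1}

lemma mem_nonscalarOfTrace_iff [NoZeroDivisors R] {t : R} {A : SL(2, R)} :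
    A ∈ nonscalarOfTrace t ↔
      (A : Matrix (Fin 2) (Fin 2) R).trace = t ∧ A ∉ Subgroup.center SL(2, R) := by
  rw [mem_center_SL2_iff_eq_one_or_eq_neg_one, not_or]
  rfl

lemma trace_eq_of_isConj {n : Type*} [Fintype n] [DecidableEq n]
    {A B : Matrix.SpecialLinearGroup n R} (h : IsConj A B) :
    (A : Matrix n n R).trace = (B : Matrix n n R).trace := by
  obtain ⟨g, rfl⟩ := isConj_iff.1 h
  rw [Matrix.SpecialLinearGroup.coe_mul, trace_mul_comm, ← Matrix.SpecialLinearGroup.coe_mul,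
    inv_mul_cancel_left]

theorem conjugatesOf_eq_nonscalarOfTrace (hK : ∀ x : K, IsSquare x) {t : K} {A : SL(2, K)}
    (hA : A ∈ nonscalarOfTrace t) : conjugatesOf A = nonscalarOfTrace t := by
  obtain ⟨rfl, hA'⟩ := mem_nonscalarOfTrace_iff.1 hA
  ext B
  rw [mem_nonscalarOfTrace_iff]
  constructor
  · intro (h : IsConj A B)
    exact ⟨(trace_eq_of_isConj h).symm, fun hB ↦ hA' (h.eq_of_right_mem_center hB ▸ hB)⟩
  · rintro ⟨htr, hB⟩
    exact (isConj_companionSL2 hK hA').trans (htr ▸ (isConj_companionSL2 hK hB).symm)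

end Conjugacy

section Centralizers

lemma mem_centralizer_singleton_iff_commute_coe {n R : Type*} [Fintype n] [DecidableEq n]
    [CommRing R] {A B : Matrix.SpecialLinearGroup n R} :
    B ∈ Subgroup.centralizer {A} ↔ Commute (B : Matrix n n R) (A : Matrix n n R) :=
  Subgroup.mem_centralizer_singleton_iff.trans Subtype.ext_iff

variable {R : Type*} [CommRing R]

lemma commute_jordanBlock_iff {M : Matrix (Fin 2) (Fin 2) R} {a : R} :
    Commute M !![a, 1; 0, a] ↔ M 1 0 = 0 ∧ M 0 0 = M 1 1 := by
  rw [commute_iff_eq, ← Matrix.ext_iff]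
  simp only [mul_apply, Fin.forall_fin_two, Fin.sum_univ_two, of_apply, cons_val', cons_val_zero,
    cons_val_one, cons_val_fin_one]
  constructor
  · rintro ⟨⟨h00, h01⟩, -⟩
    exact ⟨by linear_combination -h00, by linear_combination h01⟩
  · rintro ⟨h10, h⟩
    rw [h10, h]
    refine ⟨⟨?_, ?_⟩, ?_, ?_⟩ <;> ring

lemma commute_diagonal_two_iff [NoZeroDivisors R] {M : Matrix (Fin 2) (Fin 2) R} {a d : R}
    (h : a ≠ d) : Commute M !![a, 0; 0, d] ↔ M 0 1 = 0 ∧ M 1 0 = 0 := by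
  rw [commute_iff_eq, ← Matrix.ext_iff]
  simp only [mul_apply, Fin.forall_fin_two, Fin.sum_univ_two, of_apply, cons_val', cons_val_zero,
    cons_val_one, cons_val_fin_one]
  have had : a - d ≠ 0 := sub_ne_zero.2 h
  constructor
  · rintro ⟨⟨-, h01⟩, h10, -⟩
    have h01' : (a - d) * M 0 1 = 0 := by linear_combination -h01
    have h10' : (a - d) * M 1 0 = 0 := by linear_combination h10
    exact ⟨(mul_eq_zero.1 h01').resolve_left had, (mul_eq_zero.1 h10').resolve_left had⟩
  · rintro ⟨h01, h10⟩
    rw [h01, h10]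
    refine ⟨⟨?_, ?_⟩, ?_, ?_⟩ <;> ring

variable (R) in
/-- `H̃_{±2}` over a general ring: the matrices `±[[1,μ],[0,1]]`. -/
def signedUnipotents : Set SL(2, R) :=
  {B | ∃ ε μ : R, (ε = 1 ∨ ε = -1) ∧ (B : Matrix (Fin 2) (Fin 2) R) = !![ε, μ; 0, ε]}

lemma mem_signedUnipotents_iff [NoZeroDivisors R] {B : SL(2, R)} :
    B ∈ signedUnipotents R ↔ B 1 0 = 0 ∧ B 0 0 = B 1 1 := by
  constructor
  · rintro ⟨ε, μ, -, hB⟩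
    simp [hB]
  · rintro ⟨h10, h⟩
    have hdet := B.det_coe
    rw [det_fin_two, h10, ← h, mul_zero, sub_zero] at hdet
    refine ⟨B 0 0, B 0 1, mul_self_eq_one_iff.1 hdet, ?_⟩
    conv_lhs => rw [eta_fin_two (B : Matrix (Fin 2) (Fin 2) R), h10, ← h]

theorem coe_centralizer_jordanBlock [NoZeroDivisors R] {A : SL(2, R)} {a : R}
    (hA : (A : Matrix (Fin 2) (Fin 2) R) = !![a, 1; 0, a]) :
    (Subgroup.centralizer {A} : Set SL(2, R)) = signedUnipotents R := by
  ext B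
  rw [SetLike.mem_coe, mem_centralizer_singleton_iff_commute_coe, hA, commute_jordanBlock_iff,
    mem_signedUnipotents_iff]

variable {K : Type*} [Field K]

variable (K) in
/-- `H̃_t` for `t ≠ ±2`, over a general field: the diagonal matrices of determinant `1`. -/
def diagonalTorus : Set SL(2, K) :=
  {B | ∃ μ : K, μ ≠ 0 ∧ (B : Matrix (Fin 2) (Fin 2) K) = !![μ, 0; 0, μ⁻¹]}

lemma mem_diagonalTorus_iff {B : SL(2, K)} :
    B ∈ diagonalTorus K ↔ B 0 1 = 0 ∧ B 1 0 = 0 := by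
  constructor
  · rintro ⟨μ, -, hB⟩
    simp [hB]
  · rintro ⟨h01, h10⟩
    have hdet := B.det_coe
    rw [det_fin_two, h01, zero_mul, sub_zero] at hdet
    refine ⟨B 0 0, left_ne_zero_of_mul_eq_one hdet, ?_⟩
    rw [← eq_inv_of_mul_eq_one_right hdet]
    conv_lhs => rw [eta_fin_two (B : Matrix (Fin 2) (Fin 2) K), h01, h10]

theorem coe_centralizer_diagonal {A : SL(2, K)} {lam : K} (hlam : lam ≠ lam⁻¹)
    (hA : (A : Matrix (Fin 2) (Fin 2) K) = !![lam, 0; 0, lam⁻¹]) :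
    (Subgroup.centralizer {A} : Set SL(2, K)) = diagonalTorus K := by
  ext B
  rw [SetLike.mem_coe, mem_centralizer_singleton_iff_commute_coe, hA,
    commute_diagonal_two_iff hlam, mem_diagonalTorus_iff]

end Centralizers

lemma presentsConjQuandle_nonscalarOfTrace {K : Type*} [Field K] (hK : ∀ x : K, IsSquare x)
    {t : K} {A : SL(2, K)} (hA : A ∈ nonscalarOfTrace t) {H : Subgroup SL(2, K)}
    (hH : H = Subgroup.centralizer {A}) : PresentsConjQuandle A H (nonscalarOfTrace t) := by
  rw [← conjugatesOf_eq_nonscalarOfTrace hK hA, hH]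
  exact presentsConjQuandle_centralizer A

theorem quandle_triplet_presentation_of_Xt_general {K : Type*} [Field K]
    (hK : ∀ x : K, IsSquare x) :
    (∀ (ε : K) (A : SL(2, K)), (A : Matrix (Fin 2) (Fin 2) K) = !![ε, 1; 0, ε] →
      ∀ H : Subgroup SL(2, K), (H : Set SL(2, K)) = signedUnipotents K →
        PresentsConjQuandle A H (nonscalarOfTrace (2 * ε))) ∧
    (∀ lam : K, lam ≠ lam⁻¹ → ∀ A : SL(2, K),
      (A : Matrix (Fin 2) (Fin 2) K) = !![lam, 0; 0, lam⁻¹] →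
      ∀ H : Subgroup SL(2, K), (H : Set SL(2, K)) = diagonalTorus K →
        PresentsConjQuandle A H (nonscalarOfTrace (lam + lam⁻¹))) := by
  refine ⟨fun ε A hA H hH ↦ ?_, fun lam hlam A hA H hH ↦ ?_⟩
  · have hmem : A ∈ nonscalarOfTrace (2 * ε) := mem_nonscalarOfTrace_iff.2
      ⟨by rw [hA, trace_fin_two_of, two_mul], by simp [mem_center_SL2_iff, hA]⟩
    exact presentsConjQuandle_nonscalarOfTrace hK hmem
      (SetLike.coe_injective (hH.trans (coe_centralizer_jordanBlock hA).symm))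
  · have hmem : A ∈ nonscalarOfTrace (lam + lam⁻¹) := mem_nonscalarOfTrace_iff.2
      ⟨by rw [hA, trace_fin_two_of], by simpa [mem_center_SL2_iff, hA] using hlam⟩
    exact presentsConjQuandle_nonscalarOfTrace hK hmem
      (SetLike.coe_injective (hH.trans (coe_centralizer_diagonal hlam hA).symm))

lemma ne_inv_of_add_inv_ne_two {K : Type*} [Field K] {a : K} (ha : a ≠ 0) (h : a + a⁻¹ ≠ 2)
    (h' : a + a⁻¹ ≠ -2) : a ≠ a⁻¹ := by
  intro hinv
  rcases self_eq_inv₀.1 hinv with rfl | h0 | rfl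
  · exact h' (by norm_num)
  · exact ha h0
  · exact h (by norm_num)

/-- `(SL(2,ℂ), H̃_t, σ̃_t)`, where `σ̃_t(B) = A_t⁻¹ B A_t`, is a quandle
triplet (every element of `H̃_t` is fixed by `σ̃_t`), and
`φ : Q(SL(2,ℂ), H̃_t, σ̃_t) → Conj(X̃_t)`, `φ(H̃_t g) = g⁻¹ A_t g`, is a well-defined
bijection with `φ(H̃_t x ◁ H̃_t y) = φ(H̃_t y)⁻¹ · φ(H̃_t x) · φ(H̃_t y)`; hence
`Conj(X̃_t)` is isomorphic to `Q(SL(2,ℂ), H̃_t, σ̃_t)` as a quandle. -/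
theorem quandle_triplet_presentation_of_Xt :
    (∀ ε : ℂ, (ε = 1 ∨ ε = -1) → ∀ At : SL2C,
      (At : Matrix (Fin 2) (Fin 2) ℂ) = !![ε, 1; 0, ε] →
      ∀ H : Subgroup SL2C, (H : Set SL2C) = HparSL →
      (∀ h ∈ H, At⁻¹ * h * At = h) ∧
      ∃ φ : Quotient (QuotientGroup.rightRel H) → ↥(XtSL (2 * ε)),
        (∀ g : SL2C, (φ (Quotient.mk (QuotientGroup.rightRel H) g) : SL2C)
          = g⁻¹ * At * g) ∧
        Function.Bijective φ ∧
        (∀ x y : SL2C,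
          (φ (Quotient.mk (QuotientGroup.rightRel H) (At⁻¹ * (x * y⁻¹) * At * y)) : SL2C)
            = (φ (Quotient.mk (QuotientGroup.rightRel H) y) : SL2C)⁻¹
              * (φ (Quotient.mk (QuotientGroup.rightRel H) x) : SL2C)
              * (φ (Quotient.mk (QuotientGroup.rightRel H) y) : SL2C))) ∧
    (∀ t lam : ℂ, t ≠ 2 → t ≠ -2 → lam ≠ 0 → lam + lam⁻¹ = t →
      ∀ At : SL2C, (At : Matrix (Fin 2) (Fin 2) ℂ) = !![lam, 0; 0, lam⁻¹] →
      ∀ H : Subgroup SL2C, (H : Set SL2C) = HdiagSL →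
      (∀ h ∈ H, At⁻¹ * h * At = h) ∧
      ∃ φ : Quotient (QuotientGroup.rightRel H) → ↥(XtSL t),
        (∀ g : SL2C, (φ (Quotient.mk (QuotientGroup.rightRel H) g) : SL2C)
          = g⁻¹ * At * g) ∧
        Function.Bijective φ ∧
        (∀ x y : SL2C,
          (φ (Quotient.mk (QuotientGroup.rightRel H) (At⁻¹ * (x * y⁻¹) * At * y)) : SL2C)
            = (φ (Quotient.mk (QuotientGroup.rightRel H) y) : SL2C)⁻¹
              * (φ (Quotient.mk (QuotientGroup.rightRel H) x) : SL2C)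
              * (φ (Quotient.mk (QuotientGroup.rightRel H) y) : SL2C))) := by
  have general := quandle_triplet_presentation_of_Xt_general (K := ℂ) IsAlgClosed.exists_eq_mul_self
  refine ⟨fun ε _ ↦ general.1 ε, ?_⟩
  rintro _ lam h2 hneg2 h0 rfl
  exact general.2 lam (ne_inv_of_add_inv_ne_two h0 h2 hneg2)
end

section
/- Let Γ be a discrete subgroup of PSL(2,ℂ) and γ ∈ Γ a nontrivial element that is not parabolic, i.e. a lift A ∈ SL(2,ℂ) of γ satisfies tr A ∉ {2,−2}. Suppose the centralizer C_Γ(γ) = {g ∈ Γ : gγ = γg} is infinite. Then the conjugacy orbit {g⁻¹γg : g ∈ Γ} is a discrete subset of PSL(2,ℂ) (its subspace topology is discrete), and it is contained in the single set X_τ where τ = [tr A]. -/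
open Matrix

/-- `PSL(2,ℂ) = SL(2,ℂ)/{±I}` (the center of `SL(2,ℂ)` is `{±I}`). -/
abbrev PSL2C := Matrix.ProjectiveSpecialLinearGroup (Fin 2) ℂ

/-- The subspace topology on `SL(2,ℂ)` from the `2×2` complex matrices;
`PSL(2,ℂ)` then carries the quotient topology. -/
noncomputable instance : TopologicalSpace SL2C :=
  TopologicalSpace.induced (fun A => (A : Matrix (Fin 2) (Fin 2) ℂ)) inferInstance

/-- The projection `π : SL(2,ℂ) → PSL(2,ℂ)`. -/
def prSL : SL2C →* PSL2C := QuotientGroup.mk' (Subgroup.center SL2C)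

/-- `X_τ` for `τ = [t]`: the nontrivial elements of `PSL(2,ℂ)` admitting a lift of
trace `t` or `−t`. -/
def XtauP (t : ℂ) : Set PSL2C :=
  {f | f ≠ 1 ∧ ∃ A : SL2C, prSL A = f ∧
    (Matrix.trace (A : Matrix (Fin 2) (Fin 2) ℂ) = t ∨
     Matrix.trace (A : Matrix (Fin 2) (Fin 2) ℂ) = -t)}

/-- `H_[2]`: the image in `PSL(2,ℂ)` of the upper unitriangular matrices. -/
def HparP : Set PSL2C :=
  {f | ∃ B : SL2C, prSL B = f ∧ ∃ v : ℂ, (B : Matrix (Fin 2) (Fin 2) ℂ) = !![1, v; 0, 1]}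

/-- `H_τ` for `τ ∉ {[0],[2]}`: the image in `PSL(2,ℂ)` of the diagonal matrices. -/
def HdiagP : Set PSL2C :=
  {f | ∃ B : SL2C, prSL B = f ∧
    ∃ μ : ℂ, μ ≠ 0 ∧ (B : Matrix (Fin 2) (Fin 2) ℂ) = !![μ, 0; 0, μ⁻¹]}

/-- `H_[0]`: the image in `PSL(2,ℂ)` of the diagonal and antidiagonal matrices. -/
def HzeroP : Set PSL2C :=
  HdiagP ∪ {f | ∃ B : SL2C, prSL B = f ∧
    ∃ μ : ℂ, μ ≠ 0 ∧ (B : Matrix (Fin 2) (Fin 2) ℂ) = !![0, μ; -μ⁻¹, 0]}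

theorem trace_conj_specialLinearGroup {n R : Type*} [Fintype n] [DecidableEq n] [CommRing R]
    (A B : SpecialLinearGroup n R) :
    trace (B * A * B⁻¹ : SpecialLinearGroup n R).1 = trace A.1 :=
  trace_units_conj (SpecialLinearGroup.toGL B) A.1

theorem prSL_surjective : Function.Surjective prSL :=
  QuotientGroup.mk'_surjective _

theorem prSL_mem_XtauP_trace {A : SL2C} (hA : prSL A ≠ 1) : prSL A ∈ XtauP (trace A.1) :=
  ⟨hA, A, rfl, Or.inl rfl⟩

theorem conj_mem_XtauP {t : ℂ} {f : PSL2C} (hf : f ∈ XtauP t) (g : PSL2C) :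
    g * f * g⁻¹ ∈ XtauP t := by
  obtain ⟨hf1, A, rfl, hA⟩ := hf
  obtain ⟨B, rfl⟩ := prSL_surjective g
  refine ⟨mt conj_eq_one_iff.mp hf1, B * A * B⁻¹, by simp only [map_mul, map_inv], ?_⟩
  rwa [trace_conj_specialLinearGroup]

theorem setOf_conj_subset_of_mem {G : Type*} [Group G] {H : Subgroup G} {a : G} (ha : a ∈ H) :
    {x : G | ∃ g ∈ H, g⁻¹ * a * g = x} ⊆ H := by
  rintro _ ⟨g, hg, rfl⟩
  exact H.mul_mem (H.mul_mem (H.inv_mem hg) ha) hg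

theorem orbit_discrete_of_not_parabolic_general
    (Γ : Subgroup PSL2C) (hΓ : DiscreteTopology Γ) (γ : Γ) (hγ : γ ≠ 1)
    (A : SL2C) (hA : prSL A = (γ : PSL2C)) :
    DiscreteTopology ↥{x : PSL2C | ∃ g ∈ Γ, g⁻¹ * (γ : PSL2C) * g = x} ∧
    {x : PSL2C | ∃ g ∈ Γ, g⁻¹ * (γ : PSL2C) * g = x}
      ⊆ XtauP (Matrix.trace (A : Matrix (Fin 2) (Fin 2) ℂ)) := by
  refine ⟨DiscreteTopology.of_subset hΓ (setOf_conj_subset_of_mem γ.2), ?_⟩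
  rintro _ ⟨g, -, rfl⟩
  have hA1 : prSL A ≠ 1 := by simpa only [hA, ne_eq, OneMemClass.coe_eq_one] using hγ
  have hconj := conj_mem_XtauP (prSL_mem_XtauP_trace hA1) g⁻¹
  rwa [hA, inv_inv] at hconj

/-- for a discrete subgroup `Γ ≤ PSL(2,ℂ)` and a nontrivial
non-parabolic `γ ∈ Γ` (a lift `A` has `tr A ∉ {2,−2}`) with infinite centralizer
`C_Γ(γ)`, the conjugacy orbit `{g⁻¹γg : g ∈ Γ}` is a discrete subset of `PSL(2,ℂ)`
contained in the single component `X_τ`, `τ = [tr A]`. -/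
theorem orbit_discrete_of_not_parabolic
    (Γ : Subgroup PSL2C) (hΓ : DiscreteTopology Γ) (γ : Γ) (hγ : γ ≠ 1)
    (A : SL2C) (hA : prSL A = (γ : PSL2C))
    (h2 : Matrix.trace (A : Matrix (Fin 2) (Fin 2) ℂ) ≠ 2)
    (h2' : Matrix.trace (A : Matrix (Fin 2) (Fin 2) ℂ) ≠ -2)
    (hC : ((Subgroup.centralizer {γ} : Subgroup Γ) : Set Γ).Infinite) :
    DiscreteTopology ↥{x : PSL2C | ∃ g ∈ Γ, g⁻¹ * (γ : PSL2C) * g = x} ∧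
    {x : PSL2C | ∃ g ∈ Γ, g⁻¹ * (γ : PSL2C) * g = x}
      ⊆ XtauP (Matrix.trace (A : Matrix (Fin 2) (Fin 2) ℂ)) :=
  orbit_discrete_of_not_parabolic_general Γ hΓ γ hγ A hA
end
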